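/- Let Γ be an abelian group, F and A associative algebras over a field k of characteristic 0 with A unital, and let (E_α)_{α∈Γ} and (B_α)_{α∈Γ} be families of k-subspaces of F and of A, respectively, and v ∈ Γ a fixed element, such that for all α, β ∈ Γ: E_α·E_β ⊆ E_{α+β}, [E_α, E_β] ⊆ E_{α+β+v}, B_β·B_α ⊆ B_{α+β}, and [B_β, B_α] ⊆ B_{α+β−v}. Then for any α₀ ∈ Γ the subspace h = E_{α₀} ⊗ B_{α₀+v} + Σ_{α,β∈Γ} ( [E_α, E_β] ⊗ B_{β+v}·B_{α+v} + E_α·E_β ⊗ [B_{β+v}, B_{α+v}] ) is a Lie subalgebra of F ⊗ A under the commutator bracket. -/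

import Mathlib

open Submodule TensorProduct

variable (K : Type*) [Field K]

/-- The span of all products `a * b`, `a ∈ S`, `b ∈ T` (the subspace `S·T`). -/
def pSpan {R : Type*} [NonUnitalRing R] [Module K R] (S T : Submodule K R) : Submodule K R :=
  Submodule.span K {x | ∃ a ∈ S, ∃ b ∈ T, x = a * b}

/-- The span of all commutators `a * b - b * a`, `a ∈ S`, `b ∈ T` (the subspace `[S, T]`). -/
def bSpan {R : Type*} [NonUnitalRing R] [Module K R] (S T : Submodule K R) : Submodule K R :=
  Submodule.span K {x | ∃ a ∈ S, ∃ b ∈ T, x = a * b - b * a}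

/-- The `k`-th commutator space `S^(k)`: `S^(0) = S`, `S^(k) = [S, S^(k-1)]`.
For `S = ⊤` this is the commutator space `F^(k)` of the algebra. -/
def cSp {R : Type*} [NonUnitalRing R] [Module K R] (S : Submodule K R) : ℕ → Submodule K R
  | 0 => S
  | (k+1) => bSpan K S (cSp S k)

/-- `IklS K S ℓ k` is `I_k^ℓ(R, S)`: the sum of `S^(λ₁) ⋯ S^(λ_ℓ)` over
`λ₁ + ⋯ + λ_ℓ = k`, defined via the recursion `I_k^1 = S^(k)`,
`I_k^ℓ = Σ_{0 ≤ i ≤ k} S^(i) · I_{k-i}^{ℓ-1}`.  The first argument is the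
superscript `ℓ`, the second the subscript `k`; the (unused) value at `ℓ = 0` is `⊥`.
For `S = ⊤` this is `I_k^ℓ(F)`. -/
def IklS {R : Type*} [NonUnitalRing R] [Module K R] (S : Submodule K R) :
    ℕ → ℕ → Submodule K R
  | 0, _ => ⊥
  | 1, k => cSp K S k
  | (ℓ+2), k => ∑ i ∈ Finset.range (k+1), pSpan K (cSp K S i) (IklS S (ℓ+1) (k-i))

/-- `I_k^{≤ℓ}(F) = Σ_{1 ≤ ℓ' ≤ ℓ} I_k^{ℓ'}(F)`. -/
def Ikle {R : Type*} [NonUnitalRing R] [Module K R] (ℓ k : ℕ) : Submodule K R :=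
  ∑ ℓ' ∈ Finset.Icc 1 ℓ, IklS K (⊤ : Submodule K R) ℓ' k

/-- `I_k(F) = Σ_{ℓ ≥ 1} I_k^ℓ(F)`. -/
def Ik (R : Type*) [NonUnitalRing R] [Module K R] (k : ℕ) : Submodule K R :=
  ⨆ ℓ : ℕ, IklS K (⊤ : Submodule K R) (ℓ + 1) k

/-- `g^n`: the span of all products of `n` elements of `g` (set to `⊥` for `n = 0`). -/
def gPow {R : Type*} [NonUnitalRing R] [Module K R] (g : Submodule K R) : ℕ → Submodule K R
  | 0 => ⊥
  | 1 => g
  | (n+2) => pSpan K g (gPow g (n+1))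

/-- The Lie subalgebra (under the commutator bracket) generated by a subspace `S`:
the smallest subspace containing `S` and closed under `(x, y) ↦ x * y - y * x`. -/
def lieGen {R : Type*} [NonUnitalRing R] [Module K R] (S : Submodule K R) : Submodule K R :=
  sInf {T | S ≤ T ∧ ∀ x ∈ T, ∀ y ∈ T, x * y - y * x ∈ T}

/-- The subspace `S ⊗ T` of `F ⊗[K] A`: the span of all pure tensors `f ⊗ a`
with `f ∈ S`, `a ∈ T`. -/
def tSpan {F A : Type*} [AddCommGroup F] [Module K F] [AddCommGroup A] [Module K A]
    (S : Submodule K F) (T : Submodule K A) : Submodule K (F ⊗[K] A) :=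
  Submodule.span K {z | ∃ f ∈ S, ∃ a ∈ T, z = f ⊗ₜ[K] a}

/-- The current Lie algebra `(g, A)(F)`: the Lie subalgebra of `F ⊗ A` (with the
commutator bracket) generated by `F ⊗ g`. -/
def currentLie {F A : Type*} [NonUnitalRing F] [Module K F] [SMulCommClass K F F]
    [IsScalarTower K F F] [Ring A] [Algebra K A] (g : Submodule K A) :
    Submodule K (F ⊗[K] A) :=
  lieGen K (tSpan K (⊤ : Submodule K F) g)

/-! Put `T = Σ_γ E_γ ⊗ B_{γ+v}`. The identity
`[e ⊗ b, e' ⊗ b'] = [e, e'] ⊗ b'b - ee' ⊗ [b', b]` shows that `[T, T]` lies in the double sum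
occurring in `h`, and the grading hypotheses put this double sum, hence all of `h`, inside `T`.
Therefore `[h, h] ⊆ [T, T] ⊆ h`. In terms of `C_γ = B_{γ+v}` the grading hypotheses become
symmetric: `E_α E_β` and `[C_β, C_α]` have degree `α + β`, while `[E_α, E_β]` and `C_β C_α` have
degree `α + β + v`. -/

section Spans

variable {K} {R : Type*} [NonUnitalRing R] [Module K R]

theorem mul_mem_pSpan {S T : Submodule K R} {a b : R} (ha : a ∈ S) (hb : b ∈ T) :
    a * b ∈ pSpan K S T :=
  subset_span ⟨a, ha, b, hb, rfl⟩

theorem commutator_mem_bSpan {S T : Submodule K R} {a b : R} (ha : a ∈ S) (hb : b ∈ T) :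
    a * b - b * a ∈ bSpan K S T :=
  subset_span ⟨a, ha, b, hb, rfl⟩

theorem bSpan_mono {S S' T T' : Submodule K R} (hS : S ≤ S') (hT : T ≤ T') :
    bSpan K S T ≤ bSpan K S' T' :=
  span_mono fun _ ⟨a, ha, b, hb, h⟩ ↦ ⟨a, hS ha, b, hT hb, h⟩

section Bilinear

variable [SMulCommClass K R R] [IsScalarTower K R R]

theorem bSpan_eq_map₂ (S T : Submodule K R) :
    bSpan K S T = map₂ (LinearMap.mul K R - (LinearMap.mul K R).flip) S T := by
  simp only [map₂_eq_span_image2, bSpan, Set.image2, SetLike.mem_coe, LinearMap.sub_apply,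
    LinearMap.flip_apply, LinearMap.mul_apply', eq_comm]

theorem bSpan_iSup_iSup {ι κ : Sort*} (S : ι → Submodule K R) (T : κ → Submodule K R) :
    bSpan K (⨆ i, S i) (⨆ j, T j) = ⨆ i, ⨆ j, bSpan K (S i) (T j) := by
  simp_rw [bSpan_eq_map₂, map₂_iSup_left, map₂_iSup_right]

theorem bSpan_span_span_le {s t : Set R} {U : Submodule K R}
    (h : ∀ a ∈ s, ∀ b ∈ t, a * b - b * a ∈ U) : bSpan K (span K s) (span K t) ≤ U := by
  rw [bSpan_eq_map₂, map₂_span_span, span_le, Set.image2_subset_iff]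
  exact h

end Bilinear

variable {M N : Type*} [AddCommGroup M] [Module K M] [AddCommGroup N] [Module K N]

theorem tmul_mem_tSpan {S : Submodule K M} {T : Submodule K N} {m : M} {n : N} (hm : m ∈ S)
    (hn : n ∈ T) : m ⊗ₜ[K] n ∈ tSpan K S T :=
  subset_span ⟨m, hm, n, hn, rfl⟩

theorem tSpan_mono {S S' : Submodule K M} {T T' : Submodule K N} (hS : S ≤ S') (hT : T ≤ T') :
    tSpan K S T ≤ tSpan K S' T' :=
  span_mono fun _ ⟨m, hm, n, hn, h⟩ ↦ ⟨m, hS hm, n, hT hn, h⟩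

/-- The sum `Σ_γ E_γ ⊗ C_γ` of the tensor products of two families with a common index set. -/
def diagTensor {ι : Type*} (E : ι → Submodule K M) (C : ι → Submodule K N) :
    Submodule K (M ⊗[K] N) :=
  ⨆ γ, tSpan K (E γ) (C γ)

end Spans

section Tensor

variable {K} {F : Type*} [NonUnitalRing F] [Module K F]
variable {A : Type*} [NonUnitalRing A] [Module K A] {ι : Type*}

/-- The sum `Σ_{α,β} ([E_α, E_β] ⊗ C_β·C_α + E_α·E_β ⊗ [C_β, C_α])`, which absorbs all brackets of
elements of `diagTensor E C`. -/
def diagTensorBracket (E : ι → Submodule K F) (C : ι → Submodule K A) :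
    Submodule K (F ⊗[K] A) :=
  ⨆ α, ⨆ β, tSpan K (bSpan K (E α) (E β)) (pSpan K (C β) (C α)) ⊔
    tSpan K (pSpan K (E α) (E β)) (bSpan K (C β) (C α))

theorem diagTensorBracket_le_diagTensor {E : ι → Submodule K F} {C : ι → Submodule K A}
    (h_bracket_mul : ∀ α β, ∃ γ, bSpan K (E α) (E β) ≤ E γ ∧ pSpan K (C β) (C α) ≤ C γ)
    (h_mul_bracket : ∀ α β, ∃ γ, pSpan K (E α) (E β) ≤ E γ ∧ bSpan K (C β) (C α) ≤ C γ) :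
    diagTensorBracket E C ≤ diagTensor E C := by
  refine iSup₂_le fun α β ↦ sup_le ?_ ?_
  · obtain ⟨γ, hE, hC⟩ := h_bracket_mul α β
    exact le_iSup_of_le γ (tSpan_mono hE hC)
  · obtain ⟨γ, hE, hC⟩ := h_mul_bracket α β
    exact le_iSup_of_le γ (tSpan_mono hE hC)

variable [SMulCommClass K F F] [IsScalarTower K F F] [SMulCommClass K A A] [IsScalarTower K A A]

theorem tmul_commutator_tmul (e e' : F) (b b' : A) :
    (e ⊗ₜ[K] b) * (e' ⊗ₜ[K] b') - (e' ⊗ₜ[K] b') * (e ⊗ₜ[K] b) =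
      (e * e' - e' * e) ⊗ₜ[K] (b' * b) - (e * e') ⊗ₜ[K] (b' * b - b * b') := by
  simp only [Algebra.TensorProduct.tmul_mul_tmul, sub_tmul, tmul_sub]
  abel

theorem bSpan_tSpan_tSpan_le (S S' : Submodule K F) (T T' : Submodule K A) :
    bSpan K (tSpan K S T) (tSpan K S' T') ≤
      tSpan K (bSpan K S S') (pSpan K T' T) ⊔ tSpan K (pSpan K S S') (bSpan K T' T) := by
  refine bSpan_span_span_le ?_
  rintro _ ⟨e, he, b, hb, rfl⟩ _ ⟨e', he', b', hb', rfl⟩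
  rw [tmul_commutator_tmul]
  exact sub_mem
    (mem_sup_left (tmul_mem_tSpan (commutator_mem_bSpan he he') (mul_mem_pSpan hb' hb)))
    (mem_sup_right (tmul_mem_tSpan (mul_mem_pSpan he he') (commutator_mem_bSpan hb' hb)))

theorem bSpan_diagTensor_le_diagTensorBracket (E : ι → Submodule K F) (C : ι → Submodule K A) :
    bSpan K (diagTensor E C) (diagTensor E C) ≤ diagTensorBracket E C := by
  rw [diagTensor, bSpan_iSup_iSup]
  exact iSup₂_mono fun α β ↦ bSpan_tSpan_tSpan_le (E α) (E β) (C α) (C β)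

theorem bSpan_sup_diagTensorBracket_le {E : ι → Submodule K F} {C : ι → Submodule K A}
    (hEC : diagTensorBracket E C ≤ diagTensor E C) {L : Submodule K (F ⊗[K] A)}
    (hL : L ≤ diagTensor E C) :
    bSpan K (L ⊔ diagTensorBracket E C) (L ⊔ diagTensorBracket E C) ≤
      L ⊔ diagTensorBracket E C := by
  have h_le : L ⊔ diagTensorBracket E C ≤ diagTensor E C := sup_le hL hEC
  calc bSpan K (L ⊔ diagTensorBracket E C) (L ⊔ diagTensorBracket E C)
      ≤ bSpan K (diagTensor E C) (diagTensor E C) := bSpan_mono h_le h_le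
    _ ≤ diagTensorBracket E C := bSpan_diagTensor_le_diagTensorBracket E C
    _ ≤ L ⊔ diagTensorBracket E C := le_sup_right

theorem statement12_general {Γ : Type*} [AddCommGroup Γ] (v : Γ)
    (E : Γ → Submodule K F) (B : Γ → Submodule K A)
    (hEmul : ∀ α β, pSpan K (E α) (E β) ≤ E (α + β))
    (hEbrk : ∀ α β, bSpan K (E α) (E β) ≤ E (α + β + v))
    (hBmul : ∀ α β, pSpan K (B β) (B α) ≤ B (α + β))
    (hBbrk : ∀ α β, bSpan K (B β) (B α) ≤ B (α + β - v))
    {L : Submodule K (F ⊗[K] A)} (hL : L ≤ diagTensor E fun γ ↦ B (γ + v)) :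
    ∀ x ∈ L ⊔ diagTensorBracket E fun γ ↦ B (γ + v),
      ∀ y ∈ L ⊔ diagTensorBracket E fun γ ↦ B (γ + v),
        x * y - y * x ∈ L ⊔ diagTensorBracket E fun γ ↦ B (γ + v) := by
  have hBmul_shift (α β : Γ) : pSpan K (B (β + v)) (B (α + v)) ≤ B (α + β + v + v) :=
    (hBmul _ _).trans_eq (congrArg B (by abel))
  have hBbrk_shift (α β : Γ) : bSpan K (B (β + v)) (B (α + v)) ≤ B (α + β + v) :=
    (hBbrk _ _).trans_eq (congrArg B (by abel))
  have h_le := diagTensorBracket_le_diagTensor (C := fun γ ↦ B (γ + v))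
    (fun α β ↦ ⟨α + β + v, hEbrk α β, hBmul_shift α β⟩)
    (fun α β ↦ ⟨α + β, hEmul α β, hBbrk_shift α β⟩)
  exact fun x hx y hy ↦ bSpan_sup_diagTensorBracket_le h_le hL (commutator_mem_bSpan hx hy)

end Tensor

/-- the `Γ`-graded construction. Given families of subspaces
`E_α ⊆ F`, `B_α ⊆ A` with `E_α·E_β ⊆ E_{α+β}`, `[E_α, E_β] ⊆ E_{α+β+v}`,
`B_β·B_α ⊆ B_{α+β}`, `[B_β, B_α] ⊆ B_{α+β−v}`, the subspace
`h = E_{α₀} ⊗ B_{α₀+v} + Σ_{α,β} ([E_α, E_β] ⊗ B_{β+v}·B_{α+v}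
+ E_α·E_β ⊗ [B_{β+v}, B_{α+v}])` is a Lie subalgebra of `F ⊗ A`. -/
theorem statement12 {K : Type*} [Field K] [CharZero K]
    {F : Type*} [NonUnitalRing F] [Module K F] [SMulCommClass K F F] [IsScalarTower K F F]
    {A : Type*} [Ring A] [Algebra K A]
    {Γ : Type*} [AddCommGroup Γ] (v : Γ)
    (E : Γ → Submodule K F) (B : Γ → Submodule K A)
    (hEmul : ∀ α β : Γ, pSpan K (E α) (E β) ≤ E (α + β))
    (hEbrk : ∀ α β : Γ, bSpan K (E α) (E β) ≤ E (α + β + v))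
    (hBmul : ∀ α β : Γ, pSpan K (B β) (B α) ≤ B (α + β))
    (hBbrk : ∀ α β : Γ, bSpan K (B β) (B α) ≤ B (α + β - v))
    (α₀ : Γ) :
    ∀ x ∈ tSpan K (E α₀) (B (α₀ + v)) ⊔
        ⨆ α : Γ, ⨆ β : Γ,
          (tSpan K (bSpan K (E α) (E β)) (pSpan K (B (β + v)) (B (α + v))) ⊔
            tSpan K (pSpan K (E α) (E β)) (bSpan K (B (β + v)) (B (α + v)))),
      ∀ y ∈ tSpan K (E α₀) (B (α₀ + v)) ⊔
          ⨆ α : Γ, ⨆ β : Γ,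
            (tSpan K (bSpan K (E α) (E β)) (pSpan K (B (β + v)) (B (α + v))) ⊔
              tSpan K (pSpan K (E α) (E β)) (bSpan K (B (β + v)) (B (α + v)))),
        x * y - y * x ∈ tSpan K (E α₀) (B (α₀ + v)) ⊔
          ⨆ α : Γ, ⨆ β : Γ,
            (tSpan K (bSpan K (E α) (E β)) (pSpan K (B (β + v)) (B (α + v))) ⊔
              tSpan K (pSpan K (E α) (E β)) (bSpan K (B (β + v)) (B (α + v)))) :=
  statement12_general v E B hEmul hEbrk hBmul hBbrk
    (le_iSup (fun γ ↦ tSpan K (E γ) (B (γ + v))) α₀)
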